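/- Let s ≥ 2 be an integer, let f be a homogeneous polynomial of degree s in d variables with rational coefficients, let D = D(f) be the common denominator of its coefficients and K = K(f) = sup{|f(x)| : |x| = 1}. Let α = (a₁/q, …, a_d/q) and β = (b₁/r, …, b_d/r) be rational vectors (q, r positive integers, a_i, b_i ∈ ℤ) with f(α − β) ≠ 0. If f(α) = A/q for some integer A, then |α − β|^s ≥ 1/(D K q^{s−1} r^s), where |·| is the Euclidean norm. -/

import Mathlib

/-!
Write `D = D(f)` and `K = K(f)`, and let `F = D f`, which has integer coefficients. By homogeneity
`D (q r) ^ s f(α - β) = F(r a - q b) ≡ F(r a) = r ^ s F(a) (mod q)`, and `F(a) = D q ^ s f(α)` is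
divisible by `q` as soon as `D q ^ (s - 1) f(α)` is an integer. Hence `D q ^ (s - 1) r ^ s f(α - β)`
is an integer; being nonzero it has absolute value at least `1`, while
`|f(α - β)| ≤ K |α - β| ^ s`.
-/

open MvPolynomial

section Evaluation

variable {σ R : Type*}

theorem aeval_smul_of_isHomogeneous {S : Type*} [CommSemiring R] [CommSemiring S] [Algebra R S]
    {f : MvPolynomial σ R} {s : ℕ} (hf : f.IsHomogeneous s) (c : S) (x : σ → S) :
    aeval (c • x) f = c ^ s * aeval x f := by
  simp only [aeval_def, eval₂_eq, Finset.mul_sum]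
  refine Finset.sum_congr rfl fun m hm => ?_
  have hdeg : ∑ i ∈ m.support, m i = s := (hf.degree_eq_sum_deg_support hm).symm
  simp only [Pi.smul_apply, smul_eq_mul, mul_pow, Finset.prod_mul_distrib,
    Finset.prod_pow_eq_pow_sum, hdeg]
  ring

theorem eval_smul_of_isHomogeneous [CommSemiring R] {f : MvPolynomial σ R} {s : ℕ}
    (hf : f.IsHomogeneous s) (c : R) (x : σ → R) : eval (c • x) f = c ^ s * eval x f := by
  simpa only [aeval_eq_eval] using aeval_smul_of_isHomogeneous hf c x

theorem eval_sub_eval_mem_of_forall_sub_mem [CommRing R] (I : Ideal R) (f : MvPolynomial σ R)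
    {x y : σ → R} (hxy : ∀ i, x i - y i ∈ I) : eval x f - eval y f ∈ I := by
  have hmk : Ideal.Quotient.mk I ∘ x = Ideal.Quotient.mk I ∘ y :=
    funext fun i => Ideal.Quotient.eq.2 (hxy i)
  rw [← Ideal.Quotient.eq, eval, eval, coe_eval₂Hom, coe_eval₂Hom, eval₂_comp_left,
    eval₂_comp_left, hmk]

theorem dvd_eval_smul_sub_smul [CommRing R] {f : MvPolynomial σ R} {s : ℕ}
    (hf : f.IsHomogeneous s) {q : R} {a : σ → R} (ha : q ∣ eval a f) (r : R) (b : σ → R) :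
    q ∣ eval (r • a - q • b) f := by
  have hcongr : q ∣ eval (r • a - q • b) f - eval (r • a) f := by
    rw [← Ideal.mem_span_singleton]
    exact eval_sub_eval_mem_of_forall_sub_mem _ f fun i =>
      Ideal.mem_span_singleton.2 ⟨-b i, by simp⟩
  refine (dvd_iff_dvd_of_dvd_sub hcongr).2 ?_
  rw [eval_smul_of_isHomogeneous hf]
  exact ha.mul_left _

end Evaluation

section CommonDenominator

variable {σ : Type*}

/-- The least common denominator `D(f)` of the coefficients of `f`. -/
def commonDenominator (f : MvPolynomial σ ℚ) : ℕ :=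
  f.support.lcm fun m => (f.coeff m).den

theorem commonDenominator_pos (f : MvPolynomial σ ℚ) : 0 < commonDenominator f :=
  Nat.pos_of_ne_zero <| Finset.lcm_ne_zero_iff.2 fun m _ => (f.coeff m).den_nz

theorem exists_intCast_eq_commonDenominator_mul_coeff (f : MvPolynomial σ ℚ) (m : σ →₀ ℕ) :
    ∃ n : ℤ, (n : ℚ) = commonDenominator f * f.coeff m := by
  by_cases hm : m ∈ f.support
  · obtain ⟨k, hk⟩ : (f.coeff m).den ∣ commonDenominator f := Finset.dvd_lcm hm
    refine ⟨k * (f.coeff m).num, ?_⟩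
    rw [hk, Int.cast_mul, ← Rat.den_mul_eq_num]
    push_cast
    ring
  · exact ⟨0, by simp [notMem_support_iff.1 hm]⟩

theorem exists_map_intCast_eq_commonDenominator_mul (f : MvPolynomial σ ℚ) :
    ∃ F : MvPolynomial σ ℤ, map (Int.castRingHom ℚ) F = C (commonDenominator f : ℚ) * f := by
  choose n hn using exists_intCast_eq_commonDenominator_mul_coeff f
  refine ⟨∑ m ∈ f.support, monomial m (n m), ?_⟩
  conv_rhs => arg 2; rw [f.as_sum]
  simp only [map_sum, map_monomial, eq_intCast, hn, Finset.mul_sum, C_mul_monomial]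

theorem exists_intCast_eq_commonDenominator_mul_eval_sub {f : MvPolynomial σ ℚ} {s : ℕ}
    (hf : f.IsHomogeneous s) (hs : s ≠ 0) {q r : ℤ} (hq : q ≠ 0) (hr : r ≠ 0) (a b : σ → ℤ)
    {A : ℤ} (hA : commonDenominator f * (q : ℚ) ^ (s - 1) * eval (fun i => (a i : ℚ) / q) f = A) :
    ∃ n : ℤ, (n : ℚ) = commonDenominator f * (q : ℚ) ^ (s - 1) * (r : ℚ) ^ s *
      eval (fun i => (a i : ℚ) / q - (b i : ℚ) / r) f := by
  have hq' : (q : ℚ) ≠ 0 := Int.cast_ne_zero.2 hq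
  have hr' : (r : ℚ) ≠ 0 := Int.cast_ne_zero.2 hr
  have hqs : (q : ℚ) * q ^ (s - 1) = q ^ s := mul_pow_sub_one hs _
  obtain ⟨F, hF⟩ := exists_map_intCast_eq_commonDenominator_mul f
  have hFhom : F.IsHomogeneous s :=
    .of_map Int.cast_injective (f := Int.castRingHom ℚ) (hF ▸ hf.C_mul _)
  have eval_F (x : σ → ℤ) (c : ℚ) (y : σ → ℚ) (hxy : ∀ i, (x i : ℚ) = c * y i) :
      (eval x F : ℚ) = commonDenominator f * c ^ s * eval y f := by
    have hcast : Int.castRingHom ℚ ∘ x = c • y := funext hxy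
    rw [← eq_intCast (Int.castRingHom ℚ), eval, coe_eval₂Hom, eval₂_comp_left, RingHom.comp_id,
      hcast, ← eval_map, hF, eval_mul, eval_C, eval_smul_of_isHomogeneous hf, mul_assoc]
  have hdvd : q ∣ eval a F := by
    refine ⟨A, Int.cast_injective (α := ℚ) ?_⟩
    rw [eval_F a q _ fun i => (mul_div_cancel₀ _ hq').symm, Int.cast_mul, ← hA, ← hqs]
    ring
  obtain ⟨n, hn⟩ := dvd_eval_smul_sub_smul hFhom hdvd r b
  refine ⟨n, mul_left_cancel₀ hq' ?_⟩
  rw [← Int.cast_mul, ← hn, eval_F _ (q * r) (fun i => (a i : ℚ) / q - (b i : ℚ) / r), mul_pow,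
    ← hqs]
  · ring
  · intro i
    simp only [Pi.sub_apply, Pi.smul_apply, smul_eq_mul, Int.cast_sub, Int.cast_mul]
    field_simp

end CommonDenominator

section SphereSup

variable {ι R : Type*} [Fintype ι] [CommSemiring R] [Algebra R ℝ]

/-- The supremum `K(f)` of `|f|` over the Euclidean unit sphere, for a polynomial `f` whose
coefficients act on `ℝ`. It is `0` when there are no variables, the sphere being empty. -/
noncomputable def sphereSup (f : MvPolynomial ι R) : ℝ :=
  sSup {y : ℝ | ∃ x : ι → ℝ, ∑ i, x i ^ 2 = 1 ∧ y = |aeval x f|}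

theorem sphereSup_nonneg (f : MvPolynomial ι R) : 0 ≤ sphereSup f :=
  Real.sSup_nonneg fun _ ⟨_, _, hy⟩ => hy ▸ abs_nonneg _

theorem abs_aeval_le_sphereSup (f : MvPolynomial ι R) {x : ι → ℝ} (hx : ∑ i, x i ^ 2 = 1) :
    |aeval x f| ≤ sphereSup f := by
  have hcont : Continuous fun y : EuclideanSpace ℝ ι => |aeval y.ofLp f| := by
    simp only [aeval_def, eval₂_eq']
    fun_prop
  refine le_csSup (((isCompact_sphere 0 1).bddAbove_image hcont.continuousOn).mono ?_) ⟨x, hx, rfl⟩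
  rintro _ ⟨y, hy, rfl⟩
  exact ⟨WithLp.toLp 2 y, by simp [EuclideanSpace.norm_eq, hy], rfl⟩

theorem abs_aeval_le_sphereSup_mul_sqrt_pow {f : MvPolynomial ι R} {s : ℕ}
    (hf : f.IsHomogeneous s) (hs : s ≠ 0) (x : ι → ℝ) :
    |aeval x f| ≤ sphereSup f * √(∑ i, x i ^ 2) ^ s := by
  set t := √(∑ i, x i ^ 2)
  have ht_nonneg : 0 ≤ t := Real.sqrt_nonneg _
  have ht_sq : t ^ 2 = ∑ i, x i ^ 2 := Real.sq_sqrt (by positivity)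
  rcases ht_nonneg.eq_or_lt with ht0 | htpos
  · have hx : x = (0 : ℝ) • x := by
      have hsum : ∑ i, x i ^ 2 = 0 := by rw [← ht_sq, ← ht0, zero_pow two_ne_zero]
      ext i
      simpa using (Finset.sum_eq_zero_iff_of_nonneg fun i _ => sq_nonneg (x i)).1 hsum i
    rw [hx, aeval_smul_of_isHomogeneous hf, ← ht0]
    simp [hs]
  · have hunit : ∑ i, (t⁻¹ • x) i ^ 2 = 1 := by
      simp only [Pi.smul_apply, smul_eq_mul, mul_pow, ← Finset.mul_sum, ← ht_sq]
      field_simp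
    calc |aeval x f| = |aeval (t • t⁻¹ • x) f| := by rw [smul_inv_smul₀ htpos.ne']
      _ = |aeval (t⁻¹ • x) f| * t ^ s := by
        rw [aeval_smul_of_isHomogeneous hf, abs_mul, abs_of_pos (pow_pos htpos s), mul_comm]
      _ ≤ sphereSup f * t ^ s := by gcongr; exact abs_aeval_le_sphereSup f hunit

end SphereSup

theorem simplex_lemma_i_general {ι : Type*} [Fintype ι] {f : MvPolynomial ι ℚ} {s : ℕ}
    (hf : f.IsHomogeneous s) (hs : s ≠ 0) {q r : ℤ} (hq : 0 < q) (hr : 0 < r) (a b : ι → ℤ)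
    (hne : eval (fun i => (a i : ℚ) / q - (b i : ℚ) / r) f ≠ 0) {A : ℤ}
    (hA : commonDenominator f * (q : ℚ) ^ (s - 1) * eval (fun i => (a i : ℚ) / q) f = A) :
    1 / (commonDenominator f * sphereSup f * (q : ℝ) ^ (s - 1) * (r : ℝ) ^ s) ≤
      √(∑ i, ((a i : ℝ) / q - (b i : ℝ) / r) ^ 2) ^ s := by
  obtain ⟨n, hn⟩ :=
    exists_intCast_eq_commonDenominator_mul_eval_sub hf hs hq.ne' hr.ne' a b hA
  set v := eval (fun i => (a i : ℚ) / q - (b i : ℚ) / r) f with hv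
  have hD := commonDenominator_pos f
  have hK := sphereSup_nonneg f
  have hn0 : n ≠ 0 := by
    rw [← Int.cast_ne_zero (α := ℚ), hn]
    positivity
  have hv_aeval : (v : ℝ) = aeval (fun i => (a i : ℝ) / q - (b i : ℝ) / r) f := by
    rw [hv, ← aeval_eq_eval, ← eq_ratCast (algebraMap ℚ ℝ), ← aeval_algebraMap_apply]
    simp [Function.comp_def]
  refine div_le_of_le_mul₀ (by positivity) (by positivity) ?_
  calc (1 : ℝ) ≤ |(n : ℝ)| := mod_cast Int.one_le_abs hn0
    _ = commonDenominator f * q ^ (s - 1) * r ^ s * |(v : ℝ)| := by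
      rw [← Rat.cast_intCast, hn]
      push_cast
      rw [abs_mul, abs_of_pos (by positivity)]
    _ ≤ commonDenominator f * q ^ (s - 1) * r ^ s *
        (sphereSup f * √(∑ i, ((a i : ℝ) / q - (b i : ℝ) / r) ^ 2) ^ s) := by
      gcongr
      exact hv_aeval ▸ abs_aeval_le_sphereSup_mul_sqrt_pow hf hs _
    _ = _ := by ring

/-- Lemma 1(i): let `f` be a homogeneous polynomial of degree `s ≥ 2` with rational
coefficients, `D` the common denominator of its coefficients, `K = sup_{|x|=1} |f(x)|`.
If `α = a/q`, `β = b/r` are rational vectors with `f(α - β) ≠ 0` and `f(α) = A/q` for an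
integer `A`, then `|α - β|^s ≥ 1/(D K q^{s-1} r^s)`. -/
theorem simplex_lemma_i
    (d s : ℕ) (hs : 2 ≤ s)
    (f : MvPolynomial (Fin d) ℚ) (hhom : f.IsHomogeneous s)
    (D : ℕ) (hD : D = f.support.lcm fun m => (f.coeff m).den)
    (K : ℝ)
    (hK : K = sSup {y : ℝ | ∃ x : Fin d → ℝ,
      ∑ i, x i ^ 2 = 1 ∧ y = |MvPolynomial.aeval x f|})
    (q r : ℤ) (hq : 0 < q) (hr : 0 < r)
    (a b : Fin d → ℤ)
    (hne : MvPolynomial.eval (fun i => (a i : ℚ) / (q : ℚ) - (b i : ℚ) / (r : ℚ)) f ≠ 0)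
    (A : ℤ)
    (hA : MvPolynomial.eval (fun i => (a i : ℚ) / (q : ℚ)) f = (A : ℚ) / (q : ℚ)) :
    (Real.sqrt (∑ i, ((a i : ℝ) / (q : ℝ) - (b i : ℝ) / (r : ℝ)) ^ 2)) ^ s
      ≥ 1 / (D * K * (q : ℝ) ^ (s - 1) * (r : ℝ) ^ s) := by
  subst hD hK
  refine simplex_lemma_i_general hhom (by omega) hq hr a b hne
    (A := commonDenominator f * q ^ (s - 2) * A) ?_
  have hq' : (q : ℚ) ≠ 0 := by positivity
  rw [hA, show s - 1 = s - 2 + 1 by omega, pow_succ]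
  push_cast
  field_simp
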